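/- arXiv:2007.09235 — 2 statements merged into one kernel-verified Lean document; each statement's English description precedes it below -/
import Mathlib

section
/- A graph G is Hadamard diagonalizable if and only if its complement G^c is Hadamard diagonalizable. -/
open Matrix

def IsHadamardMatrix {n : ℕ} (H : Matrix (Fin n) (Fin n) ℝ) : Prop :=
  (∀ i j, H i j = 1 ∨ H i j = -1) ∧ Hᵀ * H = (n : ℝ) • 1

open scoped Classical in
noncomputable def lap {n : ℕ} (G : SimpleGraph (Fin n)) : Matrix (Fin n) (Fin n) ℝ :=
  G.lapMatrix ℝ

def HadamardDiagonalizable {n : ℕ} (G : SimpleGraph (Fin n)) : Prop :=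
  ∃ (H : Matrix (Fin n) (Fin n) ℝ) (Λ : Fin n → ℝ),
    IsHadamardMatrix H ∧ lap G = (n : ℝ)⁻¹ • (H * Matrix.diagonal Λ * Hᵀ)

/-!
The all-ones vector is in the kernel of the Laplacian `L` of `G`, so if `L H = H Λ` with `H`
Hadamard, some column `v` of `H` satisfies `L v = 0` and is therefore constant on the connected
components of `G`. Consequently `diag(v̄)` commutes with `L`, and `K = diag(v̄) H` is a Hadamard
matrix that still diagonalizes `L` and has a column of ones. Orthogonality of the columns of `K`
shows that `K` also diagonalizes the all-ones matrix `J`, hence the Laplacian `n I - J - L` of the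
complement.
-/

section Hadamard

variable {V R : Type*} [Fintype V] [DecidableEq V]

theorem isHadamard_diagonal_mul [Semiring R] [StarRing R] {H : Matrix V V R} (hH : H.IsHadamard)
    {d : V → R} (hd : ∀ i, d i ∈ unitary R) : (diagonal d * H).IsHadamard where
  apply_mem i j := by
    rw [diagonal_mul]
    exact mul_mem (hd i) (hH.apply_mem i j)
  mul_conjTranspose := by
    have hdd : diagonal d * (diagonal d)ᴴ = 1 := by
      simp [diagonal_conjTranspose, Unitary.mul_star_self_of_mem (hd _)]
    rw [conjTranspose_mul, Matrix.mul_assoc, ← Matrix.mul_assoc H, hH.mul_conjTranspose]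
    simp only [Nat.cast_smul_eq_nsmul, smul_mul_assoc, mul_smul_comm, Matrix.one_mul, hdd]
  conjTranspose_mul := by
    have hdd : (diagonal d)ᴴ * diagonal d = 1 := by
      simp [diagonal_conjTranspose, Unitary.star_mul_self_of_mem (hd _)]
    rw [conjTranspose_mul, Matrix.mul_assoc, ← Matrix.mul_assoc _ (diagonal d), hdd,
      Matrix.one_mul, hH.conjTranspose_mul]

theorem of_one_mul_eq_mul_diagonal_single_of_isHadamard [Semiring R] [StarRing R]
    {H : Matrix V V R} (hH : H.IsHadamard) {k : V} (hk : H.col k = 1) :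
    of 1 * H = H * diagonal (Pi.single k (Fintype.card V : R)) := by
  have hHk (i : V) : H i k = 1 := congrFun hk i
  ext i j
  have hsum : (of 1 * H : Matrix V V R) i j = (Hᴴ * H) k j := by simp [mul_apply, hHk]
  rw [hsum, hH.conjTranspose_mul, mul_diagonal]
  obtain rfl | hjk := eq_or_ne j k
  · simp [hHk]
  · simp [hjk, hjk.symm]

theorem eq_inv_card_smul_mul_conjTranspose_iff_of_isHadamard [Field R] [CharZero R] [StarRing R]
    {H : Matrix V V R} (hH : H.IsHadamard) (A D : Matrix V V R) :
    A = (Fintype.card V : R)⁻¹ • (H * D * Hᴴ) ↔ A * H = H * D := by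
  cases isEmpty_or_nonempty V
  · simp only [eq_iff_true_of_subsingleton]
  have hcard : (Fintype.card V : R) ≠ 0 := Nat.cast_ne_zero.mpr Fintype.card_ne_zero
  constructor
  · rintro rfl
    rw [smul_mul_assoc, Matrix.mul_assoc, hH.conjTranspose_mul, mul_smul_comm, Matrix.mul_one,
      inv_smul_smul₀ hcard]
  · intro h
    rw [← h, Matrix.mul_assoc, hH.mul_conjTranspose, mul_smul_comm, Matrix.mul_one,
      inv_smul_smul₀ hcard]

theorem exists_eq_zero_of_mul_eq_mul_diagonal [CommRing R] [IsDomain R] {A P : Matrix V V R}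
    {d : V → R} (h : A * P = P * diagonal d) (hA : A.det = 0) (hP : P.det ≠ 0) :
    ∃ k, d k = 0 := by
  have hdet := congrArg det h
  rw [det_mul, det_mul, det_diagonal, hA, zero_mul, zero_eq_mul, or_iff_right hP,
    Finset.prod_eq_zero_iff] at hdet
  simpa using hdet

/-- A matrix is Hadamard diagonalizable if it is diagonalized by a Hadamard matrix `H`, whose
entries may be arbitrary unitary elements. The condition `A = n⁻¹ H Λ Hᴴ` is encoded as
`A H = H Λ`, which involves no division and is additive in `(A, Λ)`. -/
def IsHadamardDiagonalizable [Semiring R] [StarRing R] (A : Matrix V V R) : Prop :=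
  ∃ (H : Matrix V V R) (Λ : V → R), H.IsHadamard ∧ A * H = H * diagonal Λ

end Hadamard

section Laplacian

variable {V R 𝕜 : Type*} [Fintype V] [DecidableEq V] [RCLike 𝕜]
  {G G' : SimpleGraph V} [DecidableRel G.Adj] [DecidableRel G'.Adj]

theorem lapMatrix_add_lapMatrix_of_isCompl [Ring R] (h : IsCompl G G') :
    G.lapMatrix R + G'.lapMatrix R = Fintype.card V • (1 : Matrix V V R) - of 1 := by
  have hadj : G.adjMatrix R + G'.adjMatrix R = of 1 - 1 := by
    rw [SimpleGraph.IsCompl.adjMatrix_add_adjMatrix_eq_adjMatrix_completeGraph R h,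
      SimpleGraph.adjMatrix_completeGraph_eq_of_one_sub_one]
  have hones : (of 1 : Matrix V V R) *ᵥ 1 = fun _ ↦ (Fintype.card V : R) := by
    ext i
    simp [mulVec, dotProduct]
  have hdeg : G.degMatrix R + G'.degMatrix R = Fintype.card V • (1 : Matrix V V R) - 1 := by
    have hdeg_apply (i : V) : (G.degree i + G'.degree i : R) = Fintype.card V - 1 := by
      simpa [add_mulVec, sub_mulVec, hones] using
        congrFun (congrArg (· *ᵥ (1 : V → R)) hadj) i
    simp only [SimpleGraph.degMatrix, diagonal_add, hdeg_apply]
    rw [← diagonal_sub, diagonal_one, nsmul_one, diagonal_natCast]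
  rw [SimpleGraph.lapMatrix, SimpleGraph.lapMatrix, sub_add_sub_comm, hdeg, hadj]
  abel

theorem commute_diagonal_lapMatrix [Ring R] {d : V → R} (hd : ∀ i j, G.Adj i j → d i = d j) :
    Commute (diagonal d) (G.lapMatrix R) := by
  have hdeg : Commute (diagonal d) (G.degMatrix R) := by
    simp [SimpleGraph.degMatrix, commute_iff_eq, Nat.cast_comm]
  have hadj : Commute (diagonal d) (G.adjMatrix R) := by
    ext i j
    rw [diagonal_mul, mul_diagonal]
    by_cases hij : G.Adj i j
    · simp [hij, hd i j hij]
    · simp [hij]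
  exact hdeg.sub_right hadj

theorem det_lapMatrix_eq_zero [CommRing R] [IsDomain R] [Nonempty V] : (G.lapMatrix R).det = 0 :=
  exists_mulVec_eq_zero_iff.mp ⟨fun _ ↦ 1, one_ne_zero, G.lapMatrix_mulVec_const_eq_zero⟩

theorem eq_of_adj_of_lapMatrix_mulVec_eq_zero {v : V → 𝕜} (hv : G.lapMatrix 𝕜 *ᵥ v = 0)
    {i j : V} (hij : G.Adj i j) : v i = v j := by
  have hre : G.lapMatrix ℝ *ᵥ (fun i ↦ RCLike.re (v i)) = 0 := by
    ext i
    simpa [SimpleGraph.lapMatrix_mulVec_apply] using congrArg RCLike.re (congrFun hv i)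
  have him : G.lapMatrix ℝ *ᵥ (fun i ↦ RCLike.im (v i)) = 0 := by
    ext i
    simpa [SimpleGraph.lapMatrix_mulVec_apply] using congrArg RCLike.im (congrFun hv i)
  rw [SimpleGraph.lapMatrix_mulVec_eq_zero_iff_forall_adj] at hre him
  exact RCLike.ext (hre i j hij) (him i j hij)

theorem exists_isHadamard_lapMatrix_mul_eq_and_col_eq_one [Nonempty V]
    (hG : IsHadamardDiagonalizable (G.lapMatrix 𝕜)) :
    ∃ (K : Matrix V V 𝕜) (Λ : V → 𝕜) (k : V),
      K.IsHadamard ∧ G.lapMatrix 𝕜 * K = K * diagonal Λ ∧ K.col k = 1 := by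
  obtain ⟨H, Λ, hH, hHΛ⟩ := hG
  have hdet : H.det ≠ 0 := hH.det_ne_zero (Nat.cast_ne_zero.mpr Fintype.card_ne_zero)
  obtain ⟨k, hk⟩ := exists_eq_zero_of_mul_eq_mul_diagonal hHΛ det_lapMatrix_eq_zero hdet
  have hker : G.lapMatrix 𝕜 *ᵥ H.col k = 0 := by
    ext i
    have hik := congrFun₂ hHΛ i k
    rwa [mul_diagonal, hk, mul_zero] at hik
  have hcomm : Commute (diagonal (star (H.col k))) (G.lapMatrix 𝕜) :=
    commute_diagonal_lapMatrix fun i j hij ↦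
      congrArg star (eq_of_adj_of_lapMatrix_mulVec_eq_zero hker hij)
  refine ⟨diagonal (star (H.col k)) * H, Λ, k, ?_, ?_, ?_⟩
  · exact isHadamard_diagonal_mul hH fun i ↦ Unitary.star_mem (hH.apply_mem i k)
  · rw [← Matrix.mul_assoc, ← hcomm.eq, Matrix.mul_assoc, hHΛ, Matrix.mul_assoc]
  · ext i
    simpa using Unitary.star_mul_self_of_mem (hH.apply_mem i k)

theorem isHadamardDiagonalizable_lapMatrix_of_isCompl (h : IsCompl G G')
    (hG : IsHadamardDiagonalizable (G.lapMatrix 𝕜)) :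
    IsHadamardDiagonalizable (G'.lapMatrix 𝕜) := by
  cases isEmpty_or_nonempty V
  · obtain ⟨H, Λ, hH, -⟩ := hG
    exact ⟨H, Λ, hH, Subsingleton.elim _ _⟩
  obtain ⟨K, Λ, k, hK, hKΛ, hk⟩ := exists_isHadamard_lapMatrix_mul_eq_and_col_eq_one hG
  let Λ₁ : V → 𝕜 := Pi.single k (Fintype.card V : 𝕜)
  have hJ : of 1 * K = K * diagonal Λ₁ := of_one_mul_eq_mul_diagonal_single_of_isHadamard hK hk
  refine ⟨K, fun i ↦ Fintype.card V - Λ₁ i - Λ i, hK, ?_⟩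
  calc G'.lapMatrix 𝕜 * K
      = (Fintype.card V • 1 - of 1 - G.lapMatrix 𝕜) * K := by
        rw [← lapMatrix_add_lapMatrix_of_isCompl h, add_sub_cancel_left]
    _ = K * (Fintype.card V • 1 - diagonal Λ₁ - diagonal Λ) := by
        simp only [Matrix.sub_mul, Matrix.mul_sub, hJ, hKΛ, smul_mul_assoc, mul_smul_comm,
          Matrix.one_mul, Matrix.mul_one]
    _ = K * diagonal fun i ↦ Fintype.card V - Λ₁ i - Λ i := by
        simp only [← diagonal_sub, nsmul_eq_mul, Matrix.mul_one, diagonal_natCast]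

variable (𝕜 G) in
theorem hadamardDiagonalizable_compl_iff_general [DecidableRel Gᶜ.Adj] :
    IsHadamardDiagonalizable (G.lapMatrix 𝕜) ↔ IsHadamardDiagonalizable (Gᶜ.lapMatrix 𝕜) :=
  ⟨isHadamardDiagonalizable_lapMatrix_of_isCompl isCompl_compl,
    isHadamardDiagonalizable_lapMatrix_of_isCompl isCompl_compl.symm⟩

end Laplacian

theorem isHadamardMatrix_iff_isHadamard {n : ℕ} {H : Matrix (Fin n) (Fin n) ℝ} :
    IsHadamardMatrix H ↔ H.IsHadamard := by
  have hentry : (∀ i j, H i j ∈ unitary ℝ) ↔ ∀ i j, H i j = 1 ∨ H i j = -1 := by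
    simp only [Unitary.mem_iff_eq_one_or_eq_neg_one]
  have hmul : Hᵀ * H = (n : ℝ) • 1 ↔ Hᴴ * H = (Fintype.card (Fin n) : ℝ) • 1 := by
    simp
  rw [IsHadamardMatrix, ← hentry, hmul]
  refine ⟨fun ⟨hunit, hHH⟩ ↦ ?_, fun hH ↦ ⟨hH.apply_mem, hH.conjTranspose_mul⟩⟩
  cases isEmpty_or_nonempty (Fin n)
  · exact ⟨hunit, Subsingleton.elim _ _, hHH⟩
  have hcard : IsRegular (Fintype.card (Fin n) : ℝ) :=
    .of_ne_zero (Nat.cast_ne_zero.mpr Fintype.card_ne_zero)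
  rw [← isHadamard_conjTranspose_iff]
  exact .of_mul_conjTranspose (fun i j ↦ Unitary.star_mem (hunit j i)) (by simpa using hHH) hcard

theorem lap_eq_lapMatrix {n : ℕ} (G : SimpleGraph (Fin n)) [DecidableRel G.Adj] :
    lap G = G.lapMatrix ℝ := by
  unfold lap
  congr!

theorem hadamardDiagonalizable_iff_lapMatrix {n : ℕ} (G : SimpleGraph (Fin n))
    [DecidableRel G.Adj] :
    HadamardDiagonalizable G ↔ IsHadamardDiagonalizable (G.lapMatrix ℝ) := by
  refine exists₂_congr fun H Λ ↦ ?_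
  rw [isHadamardMatrix_iff_isHadamard, lap_eq_lapMatrix]
  refine and_congr_right fun hH ↦ ?_
  simpa using eq_inv_card_smul_mul_conjTranspose_iff_of_isHadamard hH (G.lapMatrix ℝ) (diagonal Λ)

theorem hadamardDiagonalizable_compl_iff {n : ℕ} (G : SimpleGraph (Fin n)) :
    HadamardDiagonalizable G ↔ HadamardDiagonalizable Gᶜ := by
  classical
  rw [hadamardDiagonalizable_iff_lapMatrix, hadamardDiagonalizable_iff_lapMatrix]
  exact hadamardDiagonalizable_compl_iff_general ℝ G
end

section
/- Let G be a connected graph. Then G is a complete graph or a complete bipartite graph if and only if for every four distinct vertices u, v, w, x of G, if uv, vw, and wx are edges of G, then xu is also an edge of G. -/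
/-!
If four-vertex paths close up, then every vertex of a connected graph is adjacent to an end of any
given edge `ab`, because this property spreads along edges: if `z` is a neighbour of a neighbour
`y` of `a`, then the path `z y a b` makes `z` adjacent to `b`. Hence non-adjacency is transitive
and the graph is complete multipartite. If moreover `u` and `v` are distinct and non-adjacent, an
edge `ab` between neighbours of `u` would give the path `u a b v`, whose ends are not adjacent; so
there are only two parts, the neighbours and the non-neighbours of `u`.
-/

open SimpleGraph

section

variable {V : Type*} {G : SimpleGraph V}

/-- The property that the ends of every path on four vertices are adjacent. -/
def FourPathsClose (G : SimpleGraph V) : Prop :=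
  ∀ u v w x : V, u ≠ v → u ≠ w → u ≠ x → v ≠ w → v ≠ x → w ≠ x →
    G.Adj u v → G.Adj v w → G.Adj w x → G.Adj x u

/-- `G` is the complete bipartite graph with parts `A` and `Aᶜ`, either of which may be empty. -/
def IsCompleteBipartition (G : SimpleGraph V) (A : Set V) : Prop :=
  ∀ u v : V, G.Adj u v ↔ ((u ∈ A ∧ v ∉ A) ∨ (u ∉ A ∧ v ∈ A))

theorem isCompleteMultipartite_iff_adj_or_adj :
    G.IsCompleteMultipartite ↔ ∀ a b, G.Adj a b → ∀ c, G.Adj c a ∨ G.Adj c b := by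
  constructor
  · intro hG a b hab c
    by_contra! ⟨hca, hcb⟩
    exact hG.trans a c b (mt Adj.symm hca) hcb hab
  · refine fun hG ↦ ⟨fun a b c hab hbc hac ↦ ?_⟩
    exact (hG a c hac b).elim (fun hba ↦ hab hba.symm) hbc

theorem isCompleteBipartition_neighborSet (hG : G.IsCompleteMultipartite) {u : V}
    (hu : G.IsIndepSet (G.neighborSet u)) : IsCompleteBipartition G (G.neighborSet u) := by
  have hdom := isCompleteMultipartite_iff_adj_or_adj.1 hG
  intro a b
  simp only [mem_neighborSet]
  constructor
  · intro hab
    have hnot_both : ¬ (G.Adj u a ∧ G.Adj u b) := fun ⟨hua, hub⟩ ↦ hu hua hub hab.ne hab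
    have hone : G.Adj u a ∨ G.Adj u b := hdom a b hab u
    tauto
  · rintro (⟨hua, hub⟩ | ⟨hua, hub⟩)
    · exact ((hdom u a hua b).resolve_left (mt Adj.symm hub)).symm
    · exact (hdom u b hub a).resolve_left (mt Adj.symm hua)

theorem IsCompleteBipartition.fourPathsClose {A : Set V} (hA : IsCompleteBipartition G A) :
    FourPathsClose G := by
  intro u v w x _ _ _ _ _ _ huv hvw hwx
  rw [hA] at *
  tauto

namespace FourPathsClose

theorem adj_of_adj_of_adj_of_adj (h : FourPathsClose G) {u v w x : V} (hux : u ≠ x)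
    (huv : G.Adj u v) (hvw : G.Adj v w) (hwx : G.Adj w x) : G.Adj x u := by
  obtain rfl | huw := eq_or_ne u w
  · exact hwx.symm
  obtain rfl | hvx := eq_or_ne v x
  · exact huv.symm
  exact h u v w x huv.ne huw hux hvw.ne hvx hwx.ne huv hvw hwx

theorem adj_or_adj_of_adj (h : FourPathsClose G) {a b y z : V} (hab : G.Adj a b)
    (hya : G.Adj y a) (hyz : G.Adj y z) : G.Adj z a ∨ G.Adj z b := by
  obtain rfl | hzb := eq_or_ne z b
  · exact .inl hab.symm
  · exact .inr (h.adj_of_adj_of_adj_of_adj hzb hyz.symm hya hab).symm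

theorem isCompleteMultipartite (h : FourPathsClose G) (hG : G.Preconnected) :
    G.IsCompleteMultipartite := by
  refine isCompleteMultipartite_iff_adj_or_adj.2 fun a b hab c ↦ ?_
  induction (reachable_iff_reflTransGen a c).1 (hG a c) with
  | refl => exact .inr hab
  | tail _ hyz ih =>
    obtain hya | hyb := ih
    · exact h.adj_or_adj_of_adj hab hya hyz
    · exact (h.adj_or_adj_of_adj hab.symm hyb hyz).symm

theorem isIndepSet_neighborSet (h : FourPathsClose G) (hG : G.IsCompleteMultipartite) {u v : V}
    (huv : u ≠ v) (hnadj : ¬ G.Adj u v) : G.IsIndepSet (G.neighborSet u) := by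
  intro a hua b hub _ hab
  have hvb : G.Adj v b :=
    (isCompleteMultipartite_iff_adj_or_adj.1 hG u b hub v).resolve_left (mt Adj.symm hnadj)
  exact hnadj (h.adj_of_adj_of_adj_of_adj huv hua hab hvb.symm).symm

end FourPathsClose

theorem complete_or_completeBipartite_iff_fourPath_general (hG : G.Preconnected) :
    ((∀ u v : V, u ≠ v → G.Adj u v) ∨ ∃ A : Set V, IsCompleteBipartition G A) ↔
      FourPathsClose G := by
  constructor
  · rintro (hcomplete | ⟨A, hA⟩)
    · exact fun u v w x _ _ hux _ _ _ _ _ _ ↦ hcomplete x u hux.symm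
    · exact hA.fourPathsClose
  · intro h
    by_cases! hcomplete : ∀ u v : V, u ≠ v → G.Adj u v
    · exact .inl hcomplete
    · obtain ⟨u, v, huv, hnadj⟩ := hcomplete
      have hmulti := h.isCompleteMultipartite hG
      exact .inr ⟨G.neighborSet u,
        isCompleteBipartition_neighborSet hmulti (h.isIndepSet_neighborSet hmulti huv hnadj)⟩

end

theorem complete_or_completeBipartite_iff_fourPath {V : Type*} [Fintype V]
    (G : SimpleGraph V) (hconn : G.Connected) :
    ((∀ u v : V, u ≠ v → G.Adj u v) ∨
      (∃ A : Set V, ∀ u v : V, G.Adj u v ↔ ((u ∈ A ∧ v ∉ A) ∨ (u ∉ A ∧ v ∈ A)))) ↔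
    (∀ u v w x : V, u ≠ v → u ≠ w → u ≠ x → v ≠ w → v ≠ x → w ≠ x →
      G.Adj u v → G.Adj v w → G.Adj w x → G.Adj x u) :=
  complete_or_completeBipartite_iff_fourPath_general hconn.preconnected
end
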